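/- arXiv:2604.04162 — 2 statements merged into one kernel-verified Lean document; each statement's English description precedes it below -/
import Mathlib

section
/- For every s ∈ ℂ with −1 < Re(s) < 0, the function t ↦ e^{−st}·(1/2 − e^{t}) is Lebesgue integrable on (−∞,0), the improper integral lim_{R→∞} ∫_0^R e^{−st}·(1/2 − {e^t}) dt exists, and ζ(s)/s = lim_{R→∞} ∫_0^R e^{−st}·(1/2 − {e^t}) dt + ∫_{−∞}^0 e^{−st}·(1/2 − e^{t}) dt, where ζ is the Riemann zeta function and {x} = x − ⌊x⌋ denotes the fractional part. -/
open MeasureTheory Filter intervalIntegral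

/-- The periodic function `{x} (1 - {x}) / 2`, an antiderivative of `1/2 - {x}`. -/
noncomputable def fractPrimitive (x : ℝ) : ℝ := Int.fract x * (1 - Int.fract x) / 2

lemma continuous_fractPrimitive : Continuous fractPrimitive :=
  ContinuousOn.comp_fract'' (f := fun u : ℝ => u * (1 - u) / 2)
    (Continuous.continuousOn (by fun_prop)) (by simp)

lemma norm_fractPrimitive_le (x : ℝ) : ‖(fractPrimitive x : ℂ)‖ ≤ 1 := by
  have h₀ := Int.fract_nonneg x
  have h₁ := (Int.fract_lt_one x).le
  rw [Complex.norm_real, Real.norm_eq_abs, abs_le, fractPrimitive]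
  constructor <;> nlinarith

lemma norm_half_sub_fract_le (x : ℝ) : ‖(1 / 2 : ℂ) - (Int.fract x : ℝ)‖ ≤ 1 := by
  have h₀ := Int.fract_nonneg x
  have h₁ := (Int.fract_lt_one x).le
  have h : (1 / 2 : ℂ) - (Int.fract x : ℝ) = ((1 / 2 - Int.fract x : ℝ) : ℂ) := by push_cast; ring
  rw [h, Complex.norm_real, Real.norm_eq_abs, abs_le]
  constructor <;> linarith

lemma measurable_half_sub_fract : Measurable fun x : ℝ => (1 / 2 : ℂ) - (Int.fract x : ℝ) :=
  measurable_const.sub (Complex.measurable_ofReal.comp measurable_fract)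

lemma hasDerivWithinAt_fractPrimitive (x : ℝ) :
    HasDerivWithinAt fractPrimitive (1 / 2 - Int.fract x) (Set.Ioi x) x := by
  have h : HasDerivAt (fun y : ℝ => (y - ⌊x⌋) * (1 - (y - ⌊x⌋)) / 2) (1 / 2 - Int.fract x) x := by
    have h₁ : HasDerivAt (fun y : ℝ => y - ⌊x⌋) 1 x := (hasDerivAt_id x).sub_const _
    refine ((h₁.mul (h₁.const_sub 1)).div_const 2).congr_deriv ?_
    rw [← Int.self_sub_floor]
    ring
  refine h.hasDerivWithinAt.congr_of_eventuallyEq ?_ ?_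
  · filter_upwards [(tendsto_floor_right_pure_floor x).mono_left
      (nhdsWithin_mono x Set.Ioi_subset_Ici_self) (Filter.mem_pure.2 rfl : {⌊x⌋} ∈ pure ⌊x⌋)]
      with y hy
    rw [Set.mem_preimage, Set.mem_singleton_iff] at hy
    rw [fractPrimitive, ← Int.self_sub_floor, hy]
  · rw [fractPrimitive, ← Int.self_sub_floor]

lemma integrableOn_mul_cpow_of_norm_le {f : ℝ → ℂ} (hf : AEStronglyMeasurable f) {C : ℝ}
    (hC : ∀ x, ‖f x‖ ≤ C) {a : ℂ} (ha : a.re < -1) :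
    IntegrableOn (fun x : ℝ => f x * (x : ℂ) ^ a) (Set.Ioi 1) :=
  (integrableOn_Ioi_cpow_of_lt ha one_pos).bdd_mul (c := C) hf.restrict (ae_of_all _ hC)

lemma integral_half_sub_fract_mul_cpow (s : ℂ) {X : ℝ} (hX : 1 ≤ X) :
    ∫ x in (1 : ℝ)..X, ((1 / 2 : ℂ) - (Int.fract x : ℝ)) * (x : ℂ) ^ (-s - 1) =
      (X : ℂ) ^ (-s - 1) * fractPrimitive X +
        (s + 1) * ∫ x in (1 : ℝ)..X, (fractPrimitive x : ℂ) * (x : ℂ) ^ (-s - 2) := by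
  have hpos : ∀ x ∈ Set.uIcc 1 X, x ≠ 0 := fun x hx => by
    rw [Set.uIcc_of_le hX] at hx
    exact (one_pos.trans_le hx.1).ne'
  have hcont (a : ℂ) : ContinuousOn (fun x : ℝ => (x : ℂ) ^ a) (Set.uIcc 1 X) := fun x hx =>
    (Complex.continuousAt_ofReal_cpow_const _ _ (Or.inr (hpos x hx))).continuousWithinAt
  have hint : IntervalIntegrable (fun x : ℝ => (1 / 2 : ℂ) - (Int.fract x : ℝ)) volume 1 X :=
    (intervalIntegrable_const (c := (1 : ℝ))).mono_fun
      measurable_half_sub_fract.aestronglyMeasurable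
      (ae_of_all _ fun x => by simpa using norm_half_sub_fract_le x)
  have key := integral_mul_deriv_eq_deriv_mul_of_hasDeriv_right
    (u := fun x : ℝ => (x : ℂ) ^ (-s - 1)) (v := fun x => (fractPrimitive x : ℂ))
    (u' := fun x : ℝ => (-s - 1) * (x : ℂ) ^ (-s - 2))
    (v' := fun x => (1 / 2 : ℂ) - (Int.fract x : ℝ)) (a := 1) (b := X) (hcont _)
    (Complex.continuous_ofReal.comp continuous_fractPrimitive).continuousOn
    (fun x hx => by
      have hx₀ : x ≠ 0 := hpos x (Set.Ioo_subset_Icc_self hx)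
      have hx₁ : 0 < x := by
        rw [min_eq_left hX] at hx
        exact one_pos.trans hx.1
      have h := (hasDerivAt_id (x : ℂ)).cpow_const (c := -s - 1)
        (Complex.ofReal_mem_slitPlane.2 hx₁)
      have h' := h.comp_ofReal.hasDerivWithinAt (s := Set.Ioi x)
      simpa [sub_sub, one_add_one_eq_two] using h')
    (fun x _ => by
      have h := (hasDerivWithinAt_fractPrimitive x).ofReal_comp
      simpa using h)
    ((hcont _).intervalIntegrable.const_mul _) hint
  have h₁ : fractPrimitive 1 = 0 := by simp [fractPrimitive]
  simp only [h₁, Complex.ofReal_zero, mul_zero, sub_zero] at key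
  calc _ = ∫ x in (1 : ℝ)..X, (x : ℂ) ^ (-s - 1) * ((1 / 2 : ℂ) - (Int.fract x : ℝ)) := by
        simp only [mul_comm]
    _ = _ := by
        rw [key, sub_eq_add_neg, ← intervalIntegral.integral_neg,
          ← intervalIntegral.integral_const_mul]
        congr 2
        ext x
        ring

lemma tendsto_integral_half_sub_fract_mul_cpow {s : ℂ} (hs : -1 < s.re) :
    Tendsto (fun X : ℝ => ∫ x in (1 : ℝ)..X,
        ((1 / 2 : ℂ) - (Int.fract x : ℝ)) * (x : ℂ) ^ (-s - 1)) atTop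
      (nhds ((s + 1) * ∫ x in Set.Ioi (1 : ℝ), (fractPrimitive x : ℂ) * (x : ℂ) ^ (-s - 2))) := by
  have hint : IntegrableOn (fun x : ℝ => (fractPrimitive x : ℂ) * (x : ℂ) ^ (-s - 2))
      (Set.Ioi 1) :=
    integrableOn_mul_cpow_of_norm_le
      (Complex.continuous_ofReal.comp continuous_fractPrimitive).aestronglyMeasurable
      norm_fractPrimitive_le (by simp; linarith)
  have hlim := (intervalIntegral_tendsto_integral_Ioi 1 hint tendsto_id).const_mul (s + 1)
  have hzero : Tendsto (fun X : ℝ => (X : ℂ) ^ (-s - 1) * fractPrimitive X) atTop (nhds 0) := by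
    refine squeeze_zero_norm' ?_ (tendsto_rpow_neg_atTop (show 0 < s.re + 1 by linarith))
    filter_upwards [eventually_gt_atTop 0] with X hX
    rw [norm_mul, Complex.norm_cpow_eq_rpow_re_of_pos hX]
    have h : (-s - 1).re = -(s.re + 1) := by simp; ring
    rw [h]
    exact mul_le_of_le_one_right (by positivity) (norm_fractPrimitive_le X)
  have := hzero.add hlim
  rw [zero_add] at this
  refine this.congr' ?_
  filter_upwards [eventually_ge_atTop 1] with X hX
  exact (integral_half_sub_fract_mul_cpow s hX).symm

lemma differentiableAt_integral_fractPrimitive_mul_cpow {s : ℂ} (hs : -1 < s.re) :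
    DifferentiableAt ℂ
      (fun z : ℂ => ∫ x in Set.Ioi (1 : ℝ), (fractPrimitive x : ℂ) * (x : ℂ) ^ (-z - 2)) s := by
  set f : ℝ → ℂ := (Set.Ioi (1 : ℝ)).indicator fun x => (fractPrimitive x : ℂ) with hf
  have hmellin : DifferentiableAt ℂ (mellin f) (-s - 1) := by
    refine mellin_differentiableAt_of_isBigO_rpow (a := 0) (b := -s.re - 2) ?_ ?_ ?_ ?_ ?_
    · refine LocallyIntegrable.locallyIntegrableOn ?_ _
      exact (Complex.continuous_ofReal.comp continuous_fractPrimitive).locallyIntegrable.indicator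
        measurableSet_Ioi
    · refine Asymptotics.IsBigO.of_bound 1 (Eventually.of_forall fun x => ?_)
      simpa using (norm_indicator_le_norm_self _ x).trans (norm_fractPrimitive_le x)
    · simp; linarith
    · refine Asymptotics.IsBigO.of_bound 1 ?_
      filter_upwards [mem_nhdsWithin_of_mem_nhds (Iio_mem_nhds one_pos)] with x hx
      rw [hf, Set.indicator_of_notMem (by simpa using le_of_lt hx)]
      simp
    · simp
  have heq : (fun z : ℂ => ∫ x in Set.Ioi (1 : ℝ), (fractPrimitive x : ℂ) * (x : ℂ) ^ (-z - 2)) =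
      fun z => mellin f (-z - 1) := by
    ext z
    have h (x : ℝ) : (x : ℂ) ^ (-z - 1 - 1) • f x = (Set.Ioi (1 : ℝ)).indicator
        (fun x => (fractPrimitive x : ℂ) * (x : ℂ) ^ (-z - 2)) x := by
      rw [hf, sub_sub, one_add_one_eq_two]
      by_cases hx : x ∈ Set.Ioi (1 : ℝ) <;> simp [hx, mul_comm]
    rw [mellin]
    simp only [h]
    rw [setIntegral_indicator measurableSet_Ioi, Set.Ioi_inter_Ioi]
    simp
  rw [heq]
  exact DifferentiableAt.comp (g := mellin f) (f := fun z : ℂ => -z - 1) s hmellin (by fun_prop)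

lemma riemannZeta_eq_integral_half_sub_fract {s : ℂ} (hs : 1 < s.re) :
    riemannZeta s = s / (s - 1) - 1 / 2 +
      s * ∫ x in Set.Ioi (1 : ℝ), ((1 / 2 : ℂ) - (Int.fract x : ℝ)) * (x : ℂ) ^ (-s - 1) := by
  have hs₀ : s ≠ 0 := Complex.ne_zero_of_re_pos (one_pos.trans hs)
  have hs₁ : s - 1 ≠ 0 := Complex.ne_zero_of_re_pos (by simpa using hs)
  have hL := LSeries_eq_mul_integral' 1 zero_le_one hs (by
    simpa using Asymptotics.isBigO_refl (fun n : ℕ => (n : ℝ)) atTop)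
  rw [LSeries_one_eq_riemannZeta hs] at hL
  have hA : IntegrableOn (fun x : ℝ => (x : ℂ) ^ (-s)) (Set.Ioi 1) :=
    integrableOn_Ioi_cpow_of_lt (by simpa using hs) one_pos
  have hB : IntegrableOn (fun x : ℝ => (1 / 2 : ℂ) * (x : ℂ) ^ (-s - 1)) (Set.Ioi 1) :=
    (integrableOn_Ioi_cpow_of_lt (by simp; linarith) one_pos).const_mul _
  have hC : IntegrableOn (fun x : ℝ => ((1 / 2 : ℂ) - (Int.fract x : ℝ)) * (x : ℂ) ^ (-s - 1))
      (Set.Ioi 1) :=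
    integrableOn_mul_cpow_of_norm_le measurable_half_sub_fract.aestronglyMeasurable
      norm_half_sub_fract_le (by simp; linarith)
  have hsplit : ∫ t in Set.Ioi (1 : ℝ),
        (∑ k ∈ Finset.Icc 1 ⌊t⌋₊, (1 : ℕ → ℂ) k) * (t : ℂ) ^ (-(s + 1)) =
      (∫ t in Set.Ioi (1 : ℝ), (t : ℂ) ^ (-s)) -
        (∫ t in Set.Ioi (1 : ℝ), (1 / 2 : ℂ) * (t : ℂ) ^ (-s - 1)) +
        ∫ x in Set.Ioi (1 : ℝ), ((1 / 2 : ℂ) - (Int.fract x : ℝ)) * (x : ℂ) ^ (-s - 1) := by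
    have hAB : IntegrableOn (fun x : ℝ => (x : ℂ) ^ (-s) - (1 / 2 : ℂ) * (x : ℂ) ^ (-s - 1))
        (Set.Ioi 1) := hA.sub hB
    rw [← MeasureTheory.integral_sub hA hB, ← MeasureTheory.integral_add hAB hC]
    refine setIntegral_congr_fun measurableSet_Ioi fun t ht => ?_
    have ht₀ : 0 < t := one_pos.trans ht
    have hfloor : ((⌊t⌋₊ : ℕ) : ℂ) = t - (Int.fract t : ℝ) := by
      rw [← Complex.ofReal_sub, Int.self_sub_fract, ← natCast_floor_eq_intCast_floor ht₀.le]
      simp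
    have hpow : (t : ℂ) ^ (-s) = t * (t : ℂ) ^ (-s - 1) := by
      rw [Complex.cpow_sub _ _ (Complex.ofReal_ne_zero.2 ht₀.ne'), Complex.cpow_one]
      field_simp [Complex.ofReal_ne_zero.2 ht₀.ne']
    simp only [Pi.one_apply, Finset.sum_const, Nat.card_Icc, add_tsub_cancel_right, nsmul_eq_mul,
      mul_one, hfloor, hpow, neg_add']
    ring
  rw [hL, hsplit, MeasureTheory.integral_const_mul,
    integral_Ioi_cpow_of_lt (by simpa using hs) one_pos,
    integral_Ioi_cpow_of_lt (by simp; linarith) one_pos]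
  have hs₂ : -s + 1 ≠ 0 := by rwa [← neg_ne_zero, neg_add, neg_neg, ← sub_eq_add_neg]
  simp only [Complex.ofReal_one, Complex.one_cpow, sub_add_cancel]
  have h₁ : -1 / (-s + 1) = 1 / (s - 1) := by
    rw [div_eq_div_iff hs₂ hs₁]; ring
  rw [h₁]
  field_simp

lemma riemannZeta_eq_integral_fractPrimitive {s : ℂ} (hs : -1 < s.re) (hs₁ : s ≠ 1) :
    riemannZeta s = s / (s - 1) - 1 / 2 + s * ((s + 1) *
      ∫ x in Set.Ioi (1 : ℝ), (fractPrimitive x : ℂ) * (x : ℂ) ^ (-s - 2)) := by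
  set J : ℂ → ℂ := fun z => ∫ x in Set.Ioi (1 : ℝ), (fractPrimitive x : ℂ) * (x : ℂ) ^ (-z - 2)
    with hJ
  have hopen (a : ℝ) : IsOpen {z : ℂ | a < z.re} := isOpen_lt continuous_const Complex.continuous_re
  have heq : Set.EqOn riemannZeta₁ (fun z => z - (z - 1) / 2 + (z - 1) * (z * ((z + 1) * J z)))
      {z : ℂ | -1 < z.re} := by
    refine AnalyticOnNhd.eqOn_of_preconnected_of_eventuallyEq (z₀ := 2)
      (differentiable_riemannZeta₁.differentiableOn.analyticOnNhd (hopen _))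
      (DifferentiableOn.analyticOnNhd (fun z hz => ?_) (hopen _))
      (convex_halfSpace_re_gt _).isPreconnected (by simp; norm_num) ?_
    · have := differentiableAt_integral_fractPrimitive_mul_cpow hz
      exact DifferentiableAt.differentiableWithinAt (by fun_prop)
    · filter_upwards [(hopen 1).mem_nhds (by simp : (2 : ℂ) ∈ {z : ℂ | 1 < z.re})] with z hz
      replace hz : 1 < z.re := hz
      have hz₁ : z - 1 ≠ 0 := Complex.ne_zero_of_re_pos (by simpa using hz)
      have hint : IntegrableOn
          (fun x : ℝ => ((1 / 2 : ℂ) - (Int.fract x : ℝ)) * (x : ℂ) ^ (-z - 1)) (Set.Ioi 1) :=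
        integrableOn_mul_cpow_of_norm_le measurable_half_sub_fract.aestronglyMeasurable
          norm_half_sub_fract_le (by simp; linarith)
      have hlim := tendsto_nhds_unique (intervalIntegral_tendsto_integral_Ioi 1 hint tendsto_id)
        (tendsto_integral_half_sub_fract_mul_cpow (by linarith : -1 < z.re))
      have hzeta := riemannZeta_eq_integral_half_sub_fract hz
      rw [riemannZeta_eq_inv_sub_mul (sub_ne_zero.1 hz₁), hlim] at hzeta
      field_simp at hzeta
      linear_combination hzeta / 2
  have h₁ : s - 1 ≠ 0 := sub_ne_zero.2 hs₁
  rw [riemannZeta_eq_inv_sub_mul hs₁, heq hs]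
  simp only [hJ]
  field_simp

lemma integral_comp_exp_half_sub_fract (s : ℂ) {R : ℝ} (hR : 0 ≤ R) :
    ∫ t in (0 : ℝ)..R, Complex.exp (-s * t) *
        ((1 / 2 : ℂ) - ((Int.fract (Real.exp t) : ℝ) : ℂ)) =
      ∫ x in (1 : ℝ)..Real.exp R, ((1 / 2 : ℂ) - (Int.fract x : ℝ)) * (x : ℂ) ^ (-s - 1) := by
  have himage : Real.exp '' Set.Ioc 0 R = Set.Ioc 1 (Real.exp R) := by
    ext x
    constructor
    · rintro ⟨t, ht, rfl⟩
      exact ⟨Real.one_lt_exp_iff.2 ht.1, Real.exp_le_exp.2 ht.2⟩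
    · intro hx
      have hx₀ : 0 < x := one_pos.trans hx.1
      exact ⟨Real.log x, ⟨Real.log_pos hx.1, (Real.log_le_iff_le_exp hx₀).2 hx.2⟩,
        Real.exp_log hx₀⟩
  rw [intervalIntegral.integral_of_le hR, intervalIntegral.integral_of_le (Real.one_le_exp hR),
    ← himage, integral_image_eq_integral_abs_deriv_smul measurableSet_Ioc
      (fun t _ => (Real.hasDerivAt_exp t).hasDerivWithinAt) Real.exp_injective.injOn]
  refine setIntegral_congr_fun measurableSet_Ioc fun t _ => ?_
  have hexp : (Real.exp t : ℂ) ≠ 0 := Complex.ofReal_ne_zero.2 (Real.exp_ne_zero t)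
  have hpow : (Real.exp t : ℂ) ^ (-s - 1) * Real.exp t = Complex.exp (-s * t) := by
    rw [Complex.cpow_sub _ _ hexp, Complex.cpow_one, div_mul_cancel₀ _ hexp,
      Complex.cpow_def_of_ne_zero hexp, ← Complex.ofReal_log (Real.exp_pos t).le, Real.log_exp,
      mul_comm]
  simp only [abs_of_pos (Real.exp_pos t), Complex.real_smul, ← hpow]
  ring

lemma exp_mul_half_sub_exp (s : ℂ) (t : ℝ) :
    Complex.exp (-s * t) * ((1 / 2 : ℂ) - (Real.exp t : ℂ)) =
      (1 / 2 : ℂ) * Complex.exp (-s * t) - Complex.exp ((1 - s) * t) := by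
  have h : (1 - s) * t = -s * t + t := by ring
  rw [h, Complex.exp_add, Complex.ofReal_exp]
  ring

theorem statement9 (s : ℂ) (h0 : -1 < s.re) (h1 : s.re < 0) :
    MeasureTheory.IntegrableOn
      (fun t : ℝ => Complex.exp (-s * t) * ((1/2 : ℂ) - (Real.exp t : ℂ))) (Set.Iio 0) ∧
    ∃ L : ℂ,
      Filter.Tendsto
        (fun R : ℝ => ∫ t in (0:ℝ)..R,
          Complex.exp (-s * t) * ((1/2 : ℂ) - ((Int.fract (Real.exp t) : ℝ) : ℂ)))
        Filter.atTop (nhds L) ∧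
      riemannZeta s / s =
        L + ∫ t in Set.Iio (0:ℝ),
          Complex.exp (-s * t) * ((1/2 : ℂ) - (Real.exp t : ℂ)) := by
  have hre₁ : 0 < (-s).re := by simpa using h1
  have hre₂ : 0 < (1 - s).re := by simp; linarith
  have hA : IntegrableOn (fun t : ℝ => (1 / 2 : ℂ) * Complex.exp (-s * t)) (Set.Iic 0) :=
    (integrableOn_exp_mul_complex_Iic hre₁ 0).const_mul _
  have hB : IntegrableOn (fun t : ℝ => Complex.exp ((1 - s) * t)) (Set.Iic 0) :=
    integrableOn_exp_mul_complex_Iic hre₂ 0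
  have hs₀ : s ≠ 0 := fun h => by simp [h] at h1
  have hs₁ : s ≠ 1 := fun h => by
    rw [h, Complex.one_re] at h1
    linarith
  simp only [exp_mul_half_sub_exp]
  refine ⟨(hA.sub hB).mono_set Set.Iio_subset_Iic_self, _,
    ((tendsto_integral_half_sub_fract_mul_cpow h0).comp Real.tendsto_exp_atTop).congr' ?_, ?_⟩
  · filter_upwards [eventually_ge_atTop 0] with R hR
    exact (integral_comp_exp_half_sub_fract s hR).symm
  · rw [← integral_Iic_eq_integral_Iio, MeasureTheory.integral_sub hA hB,
      MeasureTheory.integral_const_mul,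
      integral_exp_mul_complex_Iic hre₁, integral_exp_mul_complex_Iic hre₂,
      riemannZeta_eq_integral_fractPrimitive h0 hs₁]
    have h₁ : s - 1 ≠ 0 := sub_ne_zero.2 hs₁
    have h₃ : (1 : ℂ) / (1 - s) = -(1 / (s - 1)) := by
      rw [← div_neg, neg_sub]
    simp only [Complex.ofReal_zero, mul_zero, Complex.exp_zero, h₃]
    field_simp
    ring
end

section
/- For every real a < 0 there is no locally integrable function f : ℝ → ℂ such that for all s ∈ ℂ with a < Re(s) < 0 the function t ↦ e^{−st} f(t) is Lebesgue integrable on ℝ and ζ(s)/s = ∫_ℝ e^{−st} f(t) dt. In other words, ζ(s)/s admits no absolutely convergent bilateral Laplace representation with locally integrable determining function on any vertical strip adjacent to the left of the imaginary axis. -/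
open MeasureTheory

open Set Filter Topology Asymptotics

/-- The `1`-periodic continuous primitive `({x}² - {x}) / 2` of the sawtooth `{x} - 1 / 2`. -/
noncomputable def sawtoothPrimitive (x : ℝ) : ℝ := (Int.fract x ^ 2 - Int.fract x) / 2

lemma continuous_sawtoothPrimitive : Continuous sawtoothPrimitive :=
  ContinuousOn.comp_fract'' (f := fun y : ℝ => (y ^ 2 - y) / 2) (by fun_prop) (by norm_num)

lemma continuous_ofReal_sawtoothPrimitive :
    Continuous fun x : ℝ => (sawtoothPrimitive x : ℂ) :=
  Complex.continuous_ofReal.comp continuous_sawtoothPrimitive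

lemma norm_sawtoothPrimitive_le_one (x : ℝ) : ‖(sawtoothPrimitive x : ℂ)‖ ≤ 1 := by
  rw [Complex.norm_real, Real.norm_eq_abs, sawtoothPrimitive, abs_le]
  have h0 := Int.fract_nonneg x
  have h1 := (Int.fract_lt_one x).le
  constructor <;> nlinarith

lemma sawtoothPrimitive_of_mem_Ico {x : ℝ} {n : ℤ} (hx : x ∈ Ico (n : ℝ) (n + 1)) :
    sawtoothPrimitive x = ((x - n) ^ 2 - (x - n)) / 2 := by
  rw [sawtoothPrimitive, Int.fract, Int.floor_eq_on_Ico n x hx]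

lemma sawtoothPrimitive_natCast (n : ℕ) : sawtoothPrimitive n = 0 := by
  simp [sawtoothPrimitive]

lemma sawtoothPrimitive_natCast_add_half (n : ℕ) : sawtoothPrimitive (n + 1 / 2) = -1 / 8 := by
  rw [sawtoothPrimitive_of_mem_Ico (n := n) (by push_cast; constructor <;> linarith)]
  push_cast
  ring

lemma hasDerivWithinAt_sawtoothPrimitive (x : ℝ) :
    HasDerivWithinAt sawtoothPrimitive (Int.fract x - 1 / 2) (Ioi x) x := by
  have hx : x ∈ Ico (⌊x⌋ : ℝ) (⌊x⌋ + 1) := ⟨Int.floor_le x, Int.lt_floor_add_one x⟩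
  have h : HasDerivAt (fun y : ℝ => ((y - ⌊x⌋) ^ 2 - (y - ⌊x⌋)) / 2) (Int.fract x - 1 / 2) x := by
    have h1 := (hasDerivAt_id x).sub_const (⌊x⌋ : ℝ)
    refine (((h1.pow 2).sub h1).div_const 2).congr_deriv ?_
    simp only [id, Int.fract]
    push_cast
    ring
  refine h.hasDerivWithinAt.congr_of_eventuallyEq ?_ (sawtoothPrimitive_of_mem_Ico hx)
  filter_upwards [Ioo_mem_nhdsGT hx.2] with y hy
  exact sawtoothPrimitive_of_mem_Ico ⟨hx.1.trans hy.1.le, hy.2⟩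

lemma integrableOn_sawtoothPrimitive_mul_cpow {s : ℂ} (hs : -1 < s.re) :
    IntegrableOn (fun x : ℝ => (x : ℂ) ^ (-s - 2) * sawtoothPrimitive x) (Ioi 1) := by
  refine Integrable.mul_bdd (c := 1) (integrableOn_Ioi_cpow_of_lt (by simp; linarith) one_pos) ?_
    (ae_of_all _ norm_sawtoothPrimitive_le_one)
  exact continuous_ofReal_sawtoothPrimitive.aestronglyMeasurable

lemma integrableOn_natFloor_mul_cpow {s : ℂ} (hs : 1 < s.re) :
    IntegrableOn (fun x : ℝ => (⌊x⌋₊ : ℂ) * (x : ℂ) ^ (-(s + 1))) (Ioi 1) := by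
  have hg := integrableOn_Ioi_rpow_of_lt (a := -s.re) (by linarith) one_pos
  refine Integrable.mono' hg ?_ ?_
  · refine AEStronglyMeasurable.mul ?_ ?_
    · exact (measurable_from_nat.comp Nat.measurable_floor :
        Measurable fun x : ℝ => (⌊x⌋₊ : ℂ)).aestronglyMeasurable
    · exact (integrableOn_Ioi_cpow_of_lt (by simp; linarith) one_pos).aestronglyMeasurable
  · filter_upwards [ae_restrict_mem measurableSet_Ioi] with x hx
    have hx0 : 0 < x := one_pos.trans hx
    rw [norm_mul, Complex.norm_cpow_eq_rpow_re_of_pos hx0, Complex.norm_natCast]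
    calc (⌊x⌋₊ : ℝ) * x ^ (-(s + 1)).re ≤ x * x ^ (-(s + 1)).re := by
          gcongr
          exact Nat.floor_le hx0.le
      _ = x ^ (-s.re) := by
          nth_rw 1 [← Real.rpow_one x]
          rw [← Real.rpow_add hx0]
          simp

lemma tendsto_ofReal_cpow_atTop_zero {r : ℂ} (hr : r.re < 0) :
    Tendsto (fun x : ℝ => (x : ℂ) ^ r) atTop (𝓝 0) := by
  rw [tendsto_zero_iff_norm_tendsto_zero]
  have h := tendsto_rpow_neg_atTop (neg_pos.2 hr)
  rw [neg_neg] at h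
  refine h.congr' ?_
  filter_upwards [eventually_gt_atTop 0] with x hx
  rw [Complex.norm_cpow_eq_rpow_re_of_pos hx]

lemma integral_natFloor_add_sawtoothPrimitive {s : ℂ} (hs : 1 < s.re) :
    ∫ x in Ioi (1 : ℝ), ((⌊x⌋₊ : ℂ) * (x : ℂ) ^ (-(s + 1)) +
      (s + 1) * ((x : ℂ) ^ (-s - 2) * sawtoothPrimitive x)) = 1 / (s - 1) - 1 / (2 * s) := by
  have hs0 : s ≠ 0 := by rintro rfl; simp at hs; linarith
  have hs1 : 1 - s ≠ 0 := by
    intro h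
    rw [← sub_eq_zero.1 h] at hs
    simp at hs
  have hs2 : -s - 1 ≠ 0 := by
    intro h
    have := congrArg Complex.re h
    simp at this
    linarith
  let Ψ : ℝ → ℂ := fun x => (x : ℂ) ^ (1 - s) / (1 - s) + (x : ℂ) ^ (-s) / (2 * s) -
    (x : ℂ) ^ (-s - 1) * sawtoothPrimitive x
  have hint := (integrableOn_natFloor_mul_cpow hs).add
    ((integrableOn_sawtoothPrimitive_mul_cpow (s := s) (by linarith)).const_mul (s + 1))
  have hcont : ContinuousOn Ψ (Ioi 0) := by
    intro x hx
    have hx0 : x ≠ 0 := (ne_of_gt hx)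
    have hP : ContinuousAt (fun x : ℝ => (sawtoothPrimitive x : ℂ)) x :=
      continuous_ofReal_sawtoothPrimitive.continuousAt
    have hc : ∀ r : ℂ, ContinuousAt (fun x : ℝ => (x : ℂ) ^ r) x := fun r =>
      Complex.continuousAt_ofReal_cpow_const x r (Or.inr hx0)
    exact ((((hc _).div_const _).add ((hc _).div_const _)).sub
      ((hc _).mul hP)).continuousWithinAt
  have hderiv : ∀ x : ℝ, 1 < x → HasDerivWithinAt Ψ ((⌊x⌋₊ : ℂ) * (x : ℂ) ^ (-(s + 1)) +
      (s + 1) * ((x : ℂ) ^ (-s - 2) * sawtoothPrimitive x)) (Ioi x) x := by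
    intro x hx
    have hx0 : x ≠ 0 := by linarith
    have hxc : (x : ℂ) ≠ 0 := by exact_mod_cast hx0
    have h1 := ((hasDerivAt_ofReal_cpow_const hx0 hs1).div_const (1 - s)).hasDerivWithinAt
      (s := Ioi x)
    have h2 := ((hasDerivAt_ofReal_cpow_const hx0 (neg_ne_zero.2 hs0)).div_const
      (2 * s)).hasDerivWithinAt (s := Ioi x)
    have h3 := ((hasDerivAt_ofReal_cpow_const hx0 hs2).hasDerivWithinAt (s := Ioi x)).mul
      (hasDerivWithinAt_sawtoothPrimitive x).ofReal_comp
    refine ((h1.add h2).sub h3).congr_deriv ?_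
    have hfl : ((Int.fract x : ℝ) : ℂ) = x - ⌊x⌋₊ := by
      rw [Int.fract, ← natCast_floor_eq_intCast_floor (by linarith : 0 ≤ x)]
      push_cast
      ring
    have e1 : (1 : ℂ) - s - 1 = (-s - 1) + 1 := by ring
    have e2 : -(s + 1) = -s - 1 := by ring
    have e3 : -s - 1 - 1 = -s - 2 := by ring
    rw [e1, e2, e3, Complex.cpow_add _ _ hxc, Complex.cpow_one]
    push_cast
    rw [hfl]
    field_simp
    ring
  have hlim : Tendsto Ψ atTop (𝓝 0) := by
    have hc : ∀ r : ℂ, r.re < 0 → Tendsto (fun x : ℝ => (x : ℂ) ^ r) atTop (𝓝 0) :=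
      fun r => tendsto_ofReal_cpow_atTop_zero
    have h3 : Tendsto (fun x : ℝ => (x : ℂ) ^ (-s - 1) * sawtoothPrimitive x) atTop (𝓝 0) :=
      (hc _ (by simp; linarith)).zero_mul_isBoundedUnder_le
        (isBoundedUnder_of ⟨1, norm_sawtoothPrimitive_le_one⟩)
    simpa using (((hc (1 - s) (by simp; linarith)).div_const (1 - s)).add
      ((hc (-s) (by simp; linarith)).div_const (2 * s))).sub h3
  have hT := intervalIntegral_tendsto_integral_Ioi 1 hint tendsto_id
  have hT' := hlim.sub_const (Ψ 1)
  refine (tendsto_nhds_unique hT (hT'.congr' ?_)).trans ?_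
  · filter_upwards [eventually_gt_atTop 1] with b hb
    symm
    refine intervalIntegral.integral_eq_sub_of_hasDeriv_right ?_ ?_ ?_
    · refine hcont.mono ?_
      rw [id, uIcc_of_le hb.le]
      exact fun y hy => one_pos.trans_le hy.1
    · intro x hx
      rw [id, min_eq_left hb.le] at hx
      exact hderiv x hx.1
    · rw [id, intervalIntegrable_iff_integrableOn_Ioc_of_le hb.le]
      exact hint.mono_set Ioc_subset_Ioi_self
  · have h1 : sawtoothPrimitive 1 = 0 := by simpa using sawtoothPrimitive_natCast 1
    have : s - 1 ≠ 0 := by rw [← neg_sub]; exact neg_ne_zero.2 hs1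
    simp only [Ψ, h1]
    simp
    rw [← neg_sub s 1]
    field_simp
    ring

lemma riemannZeta_eq_integral_sawtoothPrimitive_of_one_lt_re {s : ℂ} (hs : 1 < s.re) :
    riemannZeta s = s / (s - 1) - 1 / 2 -
      s * (s + 1) * ∫ x in Ioi (1 : ℝ), (x : ℂ) ^ (-s - 2) * sawtoothPrimitive x := by
  have hs0 : s ≠ 0 := by rintro rfl; simp at hs; linarith
  have hL := LSeries_eq_mul_integral' 1 zero_le_one hs
    (.of_bound 1 (by filter_upwards with n; simp))
  rw [LSeries_one_eq_riemannZeta hs] at hL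
  have hI := integral_natFloor_add_sawtoothPrimitive hs
  rw [integral_add (integrableOn_natFloor_mul_cpow hs)
    ((integrableOn_sawtoothPrimitive_mul_cpow (s := s) (by linarith)).const_mul (s + 1)),
    integral_const_mul] at hI
  have hsum : ∀ t : ℝ, ∑ k ∈ Finset.Icc 1 ⌊t⌋₊, (1 : ℕ → ℂ) k = ⌊t⌋₊ := fun t => by simp
  simp only [hsum] at hL
  rw [hL, eq_sub_of_add_eq hI]
  field_simp

lemma integral_Ioi_one_eq_mellin_indicator (w : ℂ) :
    ∫ x in Ioi (1 : ℝ), (x : ℂ) ^ (w - 1) * sawtoothPrimitive x =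
      mellin ((Ioi 1).indicator fun x : ℝ => (sawtoothPrimitive x : ℂ)) w := by
  have h : ∀ x : ℝ, (x : ℂ) ^ (w - 1) • (Ioi (1 : ℝ)).indicator
      (fun x : ℝ => (sawtoothPrimitive x : ℂ)) x =
      (Ioi (1 : ℝ)).indicator (fun x : ℝ => (x : ℂ) ^ (w - 1) * sawtoothPrimitive x) x := by
    intro x
    by_cases hx : x ∈ Ioi (1 : ℝ) <;> simp [hx]
  rw [mellin, funext h, setIntegral_indicator measurableSet_Ioi,
    inter_eq_right.2 (Ioi_subset_Ioi zero_le_one)]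

lemma differentiableAt_mellin_indicator_sawtoothPrimitive {w : ℂ} (hw : w.re < 0) :
    DifferentiableAt ℂ
      (mellin ((Ioi 1).indicator fun x : ℝ => (sawtoothPrimitive x : ℂ))) w := by
  refine mellin_differentiableAt_of_isBigO_rpow (a := 0) (b := w.re - 1) ?_ ?_ hw ?_ (by linarith)
  · exact (continuous_ofReal_sawtoothPrimitive.locallyIntegrable.indicator
      measurableSet_Ioi).locallyIntegrableOn _
  · refine .of_bound 1 ?_
    filter_upwards with x
    simpa using (norm_indicator_le_norm_self _ x).trans (norm_sawtoothPrimitive_le_one x)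
  · refine (isBigO_zero _ _).congr' ?_ EventuallyEq.rfl
    filter_upwards [Ioo_mem_nhdsGT (zero_lt_one' ℝ)] with x hx
    simp [hx.2.le]

lemma riemannZeta_eq_integral_sawtoothPrimitive {s : ℂ} (hs : -1 < s.re) (hs' : s.re < 1) :
    riemannZeta s = s / (s - 1) - 1 / 2 -
      s * (s + 1) * ∫ x in Ioi (1 : ℝ), (x : ℂ) ^ (-s - 2) * sawtoothPrimitive x := by
  let G : ℂ → ℂ := fun s => s / (s - 1) - 1 / 2 - s * (s + 1) *
    mellin ((Ioi 1).indicator fun x : ℝ => (sawtoothPrimitive x : ℂ)) (-s - 1)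
  have hG : ∀ s : ℂ, s / (s - 1) - 1 / 2 -
      s * (s + 1) * ∫ x in Ioi (1 : ℝ), (x : ℂ) ^ (-s - 2) * sawtoothPrimitive x = G s := by
    intro s
    rw [show -s - 2 = (-s - 1) - 1 by ring, integral_Ioi_one_eq_mellin_indicator]
  have hGd : ∀ s : ℂ, -1 < s.re → s ≠ 1 → DifferentiableAt ℂ G s := by
    intro s hs hs1
    have hs1' := sub_ne_zero.2 hs1
    have hm : DifferentiableAt ℂ (fun s : ℂ =>
        mellin ((Ioi 1).indicator fun x : ℝ => (sawtoothPrimitive x : ℂ)) (-s - 1)) s :=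
      DifferentiableAt.comp (f := fun s : ℂ => -s - 1) s
        (differentiableAt_mellin_indicator_sawtoothPrimitive (by simp; linarith)) (by fun_prop)
    fun_prop (disch := assumption)
  have hext : ∀ U : Set ℂ, IsOpen U → Convex ℝ U → (∀ s ∈ U, -1 < s.re ∧ s ≠ 1) →
      ∀ z ∈ U, riemannZeta =ᶠ[𝓝 z] G → EqOn riemannZeta G U := by
    intro U hU hc hU1 z hz hzG
    exact AnalyticOnNhd.eqOn_of_preconnected_of_eventuallyEq
      (DifferentiableOn.analyticOnNhd (fun s hs =>
        (differentiableAt_riemannZeta (hU1 s hs).2).differentiableWithinAt) hU)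
      (DifferentiableOn.analyticOnNhd (fun s hs =>
        (hGd s (hU1 s hs).1 (hU1 s hs).2).differentiableWithinAt) hU)
      hc.isPreconnected hz hzG
  have hupper : EqOn riemannZeta G ({s | -1 < s.re} ∩ {s | 0 < s.im}) := by
    refine hext _ ((isOpen_lt continuous_const Complex.continuous_re).inter
      (isOpen_lt continuous_const Complex.continuous_im))
      ((convex_halfSpace_re_gt _).inter (convex_halfSpace_im_gt _)) ?_ (2 + Complex.I)
      (by simp; norm_num) ?_
    · rintro s ⟨h1, h2⟩
      refine ⟨h1, ?_⟩
      rintro rfl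
      simp at h2
    · filter_upwards [(isOpen_lt continuous_const Complex.continuous_re).mem_nhds
        (show (2 + Complex.I) ∈ {s : ℂ | 1 < s.re} by simp)] with s hs
      rw [riemannZeta_eq_integral_sawtoothPrimitive_of_one_lt_re hs, hG]
  rw [hG]
  refine hext ({s | -1 < s.re} ∩ {s | s.re < 1})
    ((isOpen_lt continuous_const Complex.continuous_re).inter
      (isOpen_lt Complex.continuous_re continuous_const))
    ((convex_halfSpace_re_gt _).inter (convex_halfSpace_re_lt _)) ?_ Complex.I
      (by simp) ?_ ⟨hs, hs'⟩
  · rintro s ⟨h1, h2⟩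
    refine ⟨h1, ?_⟩
    rintro rfl
    simp at h2
  · exact hupper.eventuallyEq_of_mem (((isOpen_lt continuous_const Complex.continuous_re).inter
      (isOpen_lt continuous_const Complex.continuous_im)).mem_nhds (by simp))

lemma mellinConvergent_sawtoothPrimitive {w : ℂ} (hw : -1 < w.re) (hw' : w.re < 0) :
    MellinConvergent (fun x : ℝ => (sawtoothPrimitive x : ℂ)) w := by
  refine mellinConvergent_of_isBigO_rpow (a := 0) (b := -1) ?_ ?_ hw' ?_ hw
  · exact continuous_ofReal_sawtoothPrimitive.locallyIntegrable.locallyIntegrableOn _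
  · refine .of_bound 1 ?_
    filter_upwards with x
    simpa using norm_sawtoothPrimitive_le_one x
  · refine .of_bound 1 ?_
    filter_upwards [Ioo_mem_nhdsGT (zero_lt_one' ℝ)] with x hx
    rw [sawtoothPrimitive_of_mem_Ico (n := 0) (by simpa using ⟨hx.1.le, hx.2⟩),
      Complex.norm_real, neg_neg, Real.rpow_one, one_mul, Real.norm_eq_abs, Real.norm_eq_abs,
      abs_of_pos hx.1, abs_le]
    have h0 := hx.1
    have h1 := hx.2
    push_cast
    constructor <;> nlinarith

lemma integral_Ioc_sawtoothPrimitive {s : ℂ} (hs : s.re < 0) :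
    ∫ x in Ioc (0 : ℝ) 1, (x : ℂ) ^ (-s - 2) * sawtoothPrimitive x =
      (1 / (1 - s) + 1 / s) / 2 := by
  have hs0 : s ≠ 0 := by rintro rfl; simp at hs
  have h : ∫ x in Ioc (0 : ℝ) 1, (x : ℂ) ^ (-s - 2) * sawtoothPrimitive x =
      ∫ x in Ioc (0 : ℝ) 1, ((x : ℂ) ^ (-s) - (x : ℂ) ^ (-s - 1)) / 2 := by
    refine setIntegral_congr_ae measurableSet_Ioc ?_
    filter_upwards [compl_mem_ae_iff.2 (Real.volume_singleton (a := 1))] with x hx1 hx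
    rw [sawtoothPrimitive_of_mem_Ico (n := 0)
      (by simpa using ⟨hx.1.le, lt_of_le_of_ne hx.2 hx1⟩)]
    have hxc : (x : ℂ) ≠ 0 := by exact_mod_cast hx.1.ne'
    rw [show -s = (-s - 2) + 2 by ring, show (-s - 2) + 2 - 1 = (-s - 2) + 1 by ring,
      show (-s - 2) + 2 - 2 = -s - 2 by ring, Complex.cpow_add _ _ hxc,
      Complex.cpow_add _ _ hxc, Complex.cpow_one, Complex.cpow_ofNat]
    push_cast
    ring
  have h1 : -1 < (-s).re := by simp; linarith
  have h2 : -1 < (-s - 1).re := by simp; linarith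
  rw [h, ← intervalIntegral.integral_of_le zero_le_one, intervalIntegral.integral_div,
    intervalIntegral.integral_sub (intervalIntegral.intervalIntegrable_cpow' h1)
      (intervalIntegral.intervalIntegrable_cpow' h2),
    integral_cpow (Or.inl h1), integral_cpow (Or.inl h2)]
  have h3 : -s + 1 ≠ 0 := by
    intro h
    have := congrArg Complex.re h
    simp at this
    linarith
  have h4 : -s - 1 + 1 ≠ 0 := by simpa using hs0
  rw [Complex.ofReal_one, Complex.ofReal_zero, Complex.one_cpow, Complex.one_cpow,
    Complex.zero_cpow h3, Complex.zero_cpow h4, sub_zero, sub_add_cancel, neg_add_eq_sub]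
  congr 1
  rw [div_neg, sub_neg_eq_add]

/-- On the strip `-1 < re s < 0`, `ζ(s) / (s (s + 1))` is a Mellin transform. -/
lemma mellin_sawtoothPrimitive {s : ℂ} (hs : -1 < s.re) (hs' : s.re < 0) :
    mellin (fun x : ℝ => (sawtoothPrimitive x : ℂ)) (-s - 1) =
      -(riemannZeta s / s / (s + 1)) := by
  have hc := mellinConvergent_sawtoothPrimitive (w := -s - 1) (by simp; linarith)
    (by simp; linarith)
  rw [MellinConvergent, ← Ioc_union_Ioi_eq_Ioi (zero_le_one' ℝ)] at hc
  rw [mellin, ← Ioc_union_Ioi_eq_Ioi (zero_le_one' ℝ), setIntegral_union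
    (Ioc_disjoint_Ioi le_rfl) measurableSet_Ioi hc.left_of_union hc.right_of_union]
  simp only [smul_eq_mul, show -s - 1 - 1 = -s - 2 by ring]
  rw [integral_Ioc_sawtoothPrimitive hs',
    riemannZeta_eq_integral_sawtoothPrimitive hs (hs'.trans one_pos)]
  have hs0 : s ≠ 0 := by rintro rfl; simp at hs'
  have hs1 : s - 1 ≠ 0 := by
    intro h
    have := congrArg Complex.re h
    simp at this
    linarith
  have hs1' : 1 - s ≠ 0 := by rw [← neg_sub]; exact neg_ne_zero.2 hs1
  have hs2 : s + 1 ≠ 0 := by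
    intro h
    have := congrArg Complex.re h
    simp at this
    linarith
  rw [← neg_sub s 1]
  field_simp
  ring

section LaplacePrimitive

variable {f : ℝ → ℂ} {s : ℂ}

lemma norm_cexp_neg_mul_mul (s : ℂ) (f : ℝ → ℂ) (u : ℝ) :
    ‖Complex.exp (-s * u) * f u‖ = Real.exp (-s.re * u) * ‖f u‖ := by
  rw [norm_mul, Complex.norm_exp]
  simp

lemma aestronglyMeasurable_of_integrable_cexp_mul
    (hf : Integrable fun u : ℝ => Complex.exp (-s * u) * f u) :
    AEStronglyMeasurable f := by
  have h : AEStronglyMeasurable (fun u : ℝ => Complex.exp (s * u)) :=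
    (by fun_prop : Continuous fun u : ℝ => Complex.exp (s * u)).aestronglyMeasurable
  refine (h.mul hf.aestronglyMeasurable).congr (ae_of_all _ fun u => ?_)
  simp only [Pi.mul_apply]
  rw [← mul_assoc, ← Complex.exp_add]
  simp

lemma integrableOn_Iic_cexp_mul (hs : -1 < s.re)
    (hf : Integrable fun u : ℝ => Complex.exp (-s * u) * f u) (b : ℝ) :
    IntegrableOn (fun u : ℝ => Complex.exp u * f u) (Iic b) := by
  have hm := aestronglyMeasurable_of_integrable_cexp_mul hf
  refine Integrable.mono' (hf.norm.const_mul (Real.exp ((1 + s.re) * b))).integrableOn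
    (((by fun_prop : Continuous fun u : ℝ => Complex.exp u).aestronglyMeasurable.mul hm).restrict) ?_
  filter_upwards [ae_restrict_mem measurableSet_Iic] with u hu
  rw [norm_cexp_neg_mul_mul, norm_mul, Complex.norm_exp, Complex.ofReal_re, ← mul_assoc,
    ← Real.exp_add]
  gcongr
  have : (1 + s.re) * u ≤ (1 + s.re) * b := mul_le_mul_of_nonneg_left hu (by linarith)
  linarith

/-- The kernel whose two iterated integrals compute the Mellin transform of
`x ↦ ∫ u ≤ log x, exp u * f u`. -/
noncomputable def laplaceKernel (f : ℝ → ℂ) (s : ℂ) (x u : ℝ) : ℂ :=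
  (Ioi (Real.exp u)).indicator (fun x : ℝ => (x : ℂ) ^ (-s - 2) * (Complex.exp u * f u)) x

lemma setIntegral_Ioi_indicator_Ioi_exp {E : Type*} [NormedAddCommGroup E] [NormedSpace ℝ E]
    (g : ℝ → E) (u : ℝ) :
    ∫ x in Ioi (0 : ℝ), (Ioi (Real.exp u)).indicator g x = ∫ x in Ioi (Real.exp u), g x := by
  rw [setIntegral_indicator measurableSet_Ioi,
    inter_eq_right.2 (Ioi_subset_Ioi (Real.exp_pos u).le)]

lemma integrable_laplaceKernel (hs : -1 < s.re)
    (hf : Integrable fun u : ℝ => Complex.exp (-s * u) * f u) :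
    Integrable (Function.uncurry (laplaceKernel f s)) ((volume.restrict (Ioi 0)).prod volume) := by
  have hm := aestronglyMeasurable_of_integrable_cexp_mul hf
  have hset : MeasurableSet {p : ℝ × ℝ | Real.exp p.2 < p.1} :=
    measurableSet_lt (by fun_prop) measurable_fst
  have hmeas : AEStronglyMeasurable (Function.uncurry (laplaceKernel f s))
      ((volume.restrict (Ioi 0)).prod volume) := by
    have h1 : AEStronglyMeasurable (fun p : ℝ × ℝ => (p.1 : ℂ) ^ (-s - 2) *
        (Complex.exp p.2 * f p.2)) ((volume.restrict (Ioi 0)).prod volume) := by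
      refine AEStronglyMeasurable.mul ?_ (AEStronglyMeasurable.mul ?_ hm.comp_snd)
      · exact (by fun_prop : Measurable fun p : ℝ × ℝ =>
          (p.1 : ℂ) ^ (-s - 2)).aestronglyMeasurable
      · exact (by fun_prop : Continuous fun p : ℝ × ℝ =>
          Complex.exp p.2).aestronglyMeasurable
    exact h1.indicator hset
  rw [integrable_prod_iff' hmeas]
  constructor
  · refine ae_of_all _ fun u => ?_
    simp only [Function.uncurry_apply_pair, laplaceKernel]
    rw [integrable_indicator_iff measurableSet_Ioi, IntegrableOn, Measure.restrict_restrict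
      measurableSet_Ioi, inter_eq_left.2 (Ioi_subset_Ioi (Real.exp_pos u).le)]
    exact (integrableOn_Ioi_cpow_of_lt (by simp; linarith) (Real.exp_pos u)).mul_const _
  · refine (hf.norm.mul_const (1 / (1 + s.re))).congr (ae_of_all _ fun u => ?_)
    simp only [Function.uncurry_apply_pair, laplaceKernel, norm_indicator_eq_indicator_norm]
    rw [setIntegral_Ioi_indicator_Ioi_exp, norm_cexp_neg_mul_mul]
    have h : ∫ x in Ioi (Real.exp u), ‖(x : ℂ) ^ (-s - 2) * (Complex.exp u * f u)‖ =
        ∫ x in Ioi (Real.exp u), x ^ (-s.re - 2) * (Real.exp u * ‖f u‖) := by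
      refine setIntegral_congr_fun measurableSet_Ioi fun x hx => ?_
      simp only [norm_mul, Complex.norm_exp,
        Complex.norm_cpow_eq_rpow_re_of_pos ((Real.exp_pos u).trans hx)]
      simp
    rw [h, integral_mul_const, integral_Ioi_rpow_of_lt (by linarith) (Real.exp_pos u),
      ← Real.exp_mul, show -s.re * u = u * (-s.re - 2 + 1) + u by ring, Real.exp_add]
    rw [show -s.re - 2 + 1 = -(1 + s.re) by ring, neg_div_neg_eq]
    ring

lemma integral_laplaceKernel_left (hs : -1 < s.re) (u : ℝ) :
    ∫ x in Ioi (0 : ℝ), laplaceKernel f s x u = Complex.exp (-s * u) * f u / (s + 1) := by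
  simp only [laplaceKernel]
  rw [setIntegral_Ioi_indicator_Ioi_exp, integral_mul_const,
    integral_Ioi_cpow_of_lt (by simp; linarith) (Real.exp_pos u),
    Complex.cpow_def_of_ne_zero
      (by exact_mod_cast (Real.exp_pos u).ne'), ← Complex.ofReal_log (Real.exp_pos u).le,
    Real.log_exp, show -s * (u : ℂ) = u * (-s - 2 + 1) + u by ring,
    Complex.exp_add, show -s - 2 + 1 = -(s + 1) by ring, neg_div_neg_eq]
  ring

lemma integral_laplaceKernel_right {x : ℝ} (hx : 0 < x) :
    ∫ u, laplaceKernel f s x u =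
      (x : ℂ) ^ (-s - 1 - 1) • ∫ u in Iic (Real.log x), Complex.exp u * f u := by
  rw [integral_Iic_eq_integral_Iio, ← integral_indicator measurableSet_Iio, smul_eq_mul,
    ← integral_const_mul]
  refine integral_congr_ae (ae_of_all _ fun u => ?_)
  have h : x ∈ Ioi (Real.exp u) ↔ u ∈ Iio (Real.log x) := (Real.lt_log_iff_exp_lt hx).symm
  simp only [laplaceKernel, show -s - 1 - 1 = -s - 2 by ring]
  by_cases hu : u ∈ Iio (Real.log x)
  · rw [indicator_of_mem (h.2 hu), indicator_of_mem hu]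
  · rw [indicator_of_notMem (mt h.1 hu), indicator_of_notMem hu, mul_zero]

lemma mellinConvergent_integral_Iic_log (hs : -1 < s.re)
    (hf : Integrable fun u : ℝ => Complex.exp (-s * u) * f u) :
    MellinConvergent (fun x : ℝ => ∫ u in Iic (Real.log x), Complex.exp u * f u) (-s - 1) :=
  (integrable_laplaceKernel hs hf).integral_prod_left.congr
    ((ae_restrict_mem measurableSet_Ioi).mono fun _ hx => integral_laplaceKernel_right hx)

lemma mellin_integral_Iic_log (hs : -1 < s.re)
    (hf : Integrable fun u : ℝ => Complex.exp (-s * u) * f u) :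
    mellin (fun x : ℝ => ∫ u in Iic (Real.log x), Complex.exp u * f u) (-s - 1) =
      (∫ u : ℝ, Complex.exp (-s * u) * f u) / (s + 1) := by
  rw [mellin, ← setIntegral_congr_fun measurableSet_Ioi fun x hx =>
      integral_laplaceKernel_right (f := f) (s := s) hx,
    integral_integral_swap (integrable_laplaceKernel hs hf)]
  simp only [integral_laplaceKernel_left hs, integral_div]

lemma continuousAt_integral_Iic_log (hs : -1 < s.re)
    (hf : Integrable fun u : ℝ => Complex.exp (-s * u) * f u) {x : ℝ} (hx : 0 < x) :
    ContinuousAt (fun x : ℝ => ∫ u in Iic (Real.log x), Complex.exp u * f u) x := by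
  have hI := integrableOn_Iic_cexp_mul hs hf
  have h : ∀ y : ℝ, ∫ u in Iic (Real.log y), Complex.exp u * f u =
      (∫ u in Iic (0 : ℝ), Complex.exp u * f u) + ∫ u in (0 : ℝ)..Real.log y, Complex.exp u * f u := by
    intro y
    rw [← intervalIntegral.integral_Iic_sub_Iic (hI _) (hI _)]
    ring
  have hc := intervalIntegral.continuous_primitive (μ := volume)
    (f := fun u : ℝ => Complex.exp u * f u) (fun a b => ⟨(hI b).mono_set Ioc_subset_Iic_self,
      (hI a).mono_set Ioc_subset_Iic_self⟩) 0
  rw [funext h]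
  exact continuousAt_const.add
    (ContinuousAt.comp (hc.continuousAt) (Real.continuousAt_log hx.ne'))

end LaplacePrimitive

/-- A function whose Mellin transform vanishes on a vertical line of absolute convergence is zero at
each positive point of continuity. -/
lemma eq_zero_of_mellin_eq_zero {g : ℝ → ℂ} {σ : ℝ} (hg : MellinConvergent g σ)
    (hzero : ∀ y : ℝ, mellin g (σ + y * Complex.I) = 0) {x : ℝ} (hx : 0 < x)
    (hgx : ContinuousAt g x) : g x = 0 := by
  rw [← mellinInv_mellin_eq σ g hx hg ?_ hgx]
  · simp [mellinInv, hzero]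
  · simp [Complex.VerticalIntegrable, hzero]

/-- If `exp u * f u` has integral `1 / 8` over each `(log n, log (n + 1 / 2)]`, then `f` has
divergent absolute integral at `+∞`, by comparison with the harmonic series. -/
lemma not_integrable_of_integral_log_interval {f : ℝ → ℂ} {s : ℂ} (hs : s.re < 0)
    (h : ∀ n : ℕ, 1 ≤ n →
      ∫ u in Real.log n..Real.log (n + 1 / 2), Complex.exp u * f u = 1 / 8) :
    ¬ Integrable fun u : ℝ => Complex.exp (-s * u) * f u := by
  intro hf
  let A : ℕ → Set ℝ := fun n => Ioc (Real.log (n + 1 : ℕ)) (Real.log ((n + 1 : ℕ) + 1 / 2))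
  have hdisj : Pairwise (Function.onFun Disjoint A) := by
    rw [pairwise_disjoint_on]
    intro m n hmn
    refine Ioc_disjoint_Ioc_of_le (Real.log_le_log (by positivity) ?_)
    have : ((m + 1 : ℕ) : ℝ) + 1 ≤ (n + 1 : ℕ) := by exact_mod_cast Nat.succ_le_succ hmn
    linarith
  have hsum := (hasSum_integral_iUnion (fun n => measurableSet_Ioc) hdisj
    hf.norm.integrableOn).summable
  have hbound : ∀ n : ℕ, 1 / 8 * (1 / ((n + 1 + 1 : ℕ) : ℝ)) ≤
      ∫ u in A n, ‖Complex.exp (-s * u) * f u‖ := by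
    intro n
    have hle : Real.log (n + 1 : ℕ) ≤ Real.log ((n + 1 : ℕ) + 1 / 2) :=
      Real.log_le_log (by positivity) (by linarith)
    have hn := h (n + 1) (by omega)
    rw [intervalIntegral.integral_of_le hle] at hn
    have h1 : (1 / 8 : ℝ) ≤ ∫ u in A n, ((n + 1 + 1 : ℕ) : ℝ) * ‖Complex.exp (-s * u) * f u‖ := by
      have h2 : (1 / 8 : ℝ) = ‖∫ u in A n, Complex.exp u * f u‖ := by rw [hn]; norm_num
      rw [h2]
      refine norm_integral_le_of_norm_le (hf.norm.const_mul _).integrableOn ?_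
      filter_upwards [ae_restrict_mem measurableSet_Ioc] with u hu
      rw [norm_cexp_neg_mul_mul, norm_mul, Complex.norm_exp, Complex.ofReal_re, ← mul_assoc]
      gcongr
      have hu0 : 0 ≤ u := (Real.log_natCast_nonneg _).trans hu.1.le
      have hexp : Real.exp u ≤ (n + 1 + 1 : ℕ) := by
        have := (Real.le_log_iff_exp_le (by positivity)).1 hu.2
        push_cast at this ⊢
        linarith
      have hone : 1 ≤ Real.exp (-s.re * u) :=
        Real.one_le_exp (mul_nonneg (by linarith) hu0)
      nlinarith [Real.exp_pos u]
    rw [integral_const_mul] at h1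
    rw [mul_one_div, div_le_iff₀ (by positivity)]
    linarith
  have hs' : Summable fun n : ℕ => 1 / 8 * (1 / ((n + 1 + 1 : ℕ) : ℝ)) :=
    hsum.of_nonneg_of_le (fun n => by positivity) hbound
  rw [summable_mul_left_iff (by norm_num)] at hs'
  exact Real.not_summable_one_div_natCast
    ((summable_nat_add_iff (f := fun n : ℕ => 1 / (n : ℝ)) 2).1 hs')

theorem statement10 (a : ℝ) (ha : a < 0) :
    ¬ ∃ f : ℝ → ℂ, MeasureTheory.LocallyIntegrable f MeasureTheory.volume ∧
      ∀ s : ℂ, a < s.re → s.re < 0 →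
        MeasureTheory.Integrable (fun t : ℝ => Complex.exp (-s * t) * f t) ∧
        riemannZeta s / s = ∫ t : ℝ, Complex.exp (-s * t) * f t := by
  rintro ⟨f, -, hf⟩
  obtain ⟨σ, hσ, hσ0⟩ := exists_between (max_lt ha (neg_one_lt_zero (R := ℝ)))
  have hσa : a < σ := (le_max_left _ _).trans_lt hσ
  have hσ1 : -1 < σ := (le_max_right _ _).trans_lt hσ
  have hfσ := (hf σ (by simpa) (by simpa)).1
  have hσ1' : -1 < (σ : ℂ).re := by simpa
  let J : ℝ → ℂ := fun x => ∫ u in Iic (Real.log x), Complex.exp u * f u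
  have hJ : ∀ x : ℝ, 0 < x → J x + sawtoothPrimitive x = 0 := by
    intro x hx
    have hconv : ∀ y : ℝ, MellinConvergent J (((-σ - 1 : ℝ) : ℂ) + y * Complex.I) ∧
        MellinConvergent (fun x : ℝ => (sawtoothPrimitive x : ℂ))
          (((-σ - 1 : ℝ) : ℂ) + y * Complex.I) ∧
        mellin J (((-σ - 1 : ℝ) : ℂ) + y * Complex.I) +
          mellin (fun x : ℝ => (sawtoothPrimitive x : ℂ))
            (((-σ - 1 : ℝ) : ℂ) + y * Complex.I) = 0 := by
      intro y
      let s : ℂ := σ - y * Complex.I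
      have hs : s.re = σ := by simp [s]
      have hs1 : -1 < s.re := by rwa [hs]
      have hs0 : s.re < 0 := by rwa [hs]
      have hw : ((-σ - 1 : ℝ) : ℂ) + y * Complex.I = -s - 1 := by
        simp only [s]
        push_cast
        ring
      obtain ⟨hi, he⟩ := hf s (by rwa [hs]) hs0
      rw [hw]
      refine ⟨mellinConvergent_integral_Iic_log hs1 hi,
        mellinConvergent_sawtoothPrimitive (by simp; linarith) (by simp; linarith), ?_⟩
      rw [mellin_integral_Iic_log hs1 hi, mellin_sawtoothPrimitive hs1 hs0, ← he,
        add_neg_cancel]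
    refine eq_zero_of_mellin_eq_zero (g := fun x => J x + sawtoothPrimitive x) (σ := -σ - 1)
      ?_ ?_ hx ((continuousAt_integral_Iic_log hσ1' hfσ hx).add
        continuous_ofReal_sawtoothPrimitive.continuousAt)
    · have := hconv 0
      simp only [Complex.ofReal_zero, zero_mul, add_zero] at this
      exact (hasMellin_add this.1 this.2.1).1
    · intro y
      obtain ⟨h1, h2, h3⟩ := hconv y
      rw [(hasMellin_add h1 h2).2, h3]
  have hI := integrableOn_Iic_cexp_mul hσ1' hfσ
  refine not_integrable_of_integral_log_interval (by simpa) (fun n hn => ?_) hfσ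
  have hn0 : (0 : ℝ) < n := by exact_mod_cast hn
  rw [← intervalIntegral.integral_Iic_sub_Iic (hI _) (hI _)]
  have h1 := hJ n hn0
  have h2 := hJ (n + 1 / 2) (by positivity)
  rw [sawtoothPrimitive_natCast] at h1
  rw [sawtoothPrimitive_natCast_add_half] at h2
  change J (n + 1 / 2) - J n = 1 / 8
  push_cast at h1 h2
  linear_combination h2 - h1
end
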